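/- Let a = (4/π)·𝒦(1/√2)², c = a·(4(a−1)² − a²)/16, and c₁ = 4√2·(√2+1)² − 1 − a − (1/2)a(a−1). Then for every K > 1, λ(K) > 1 + a(K−1) + (1/2)a(a−1)(K−1)² + c(K−1)³; and for every K ∈ (1,2), λ(K) < 1 + a(K−1) + (1/2)a(a−1)(K−1)² + c₁(K−1)³. -/

import Mathlib

open Set Filter

/-- Complete elliptic integral of the first kind. -/
noncomputable def ellK (r : ℝ) : ℝ :=
  ∫ θ in (0:ℝ)..(Real.pi / 2), (1 - r ^ 2 * Real.sin θ ^ 2) ^ (-(1/2) : ℝ)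

/-- The Grötzsch modulus μ(r) = (π/2)·𝒦'(r)/𝒦(r). -/
noncomputable def mu (r : ℝ) : ℝ :=
  Real.pi / 2 * ellK (Real.sqrt (1 - r ^ 2)) / ellK r

/-!
Write `𝒦` for the complete elliptic integral as a function of `m = r²`. In the logistic coordinate
`t = log (m / (1 - m))` one has `λ = eᵗ`, and its argument is `K = 𝒦(m) / 𝒦(1 - m)`. Both `𝒦(m)` and
`𝒦(1 - m)` solve `y'' = m (1 - m) y / 4` in this coordinate, so their Wronskian is constant, equal
to `π / 4` by Legendre's relation; hence `d/dK = v · d/dt` with `v = (4/π) 𝒦(1 - m)²`. Applying this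
derivation four times to `eᵗ` gives a positive function for `t ≥ 0`, because `-dv/dt ≤ v / 4`
there. Thus `λ'''` is strictly increasing on `[1, ∞)`, and the monotone form of l'Hôpital's rule,
applied three times, shows that the quotient of `λ` minus its quadratic Taylor polynomial at `1` by
`(K - 1)³` is strictly increasing. Its limit at `1` is `λ'''(1) / 6 = c`, and its value at `2` is
`c₁` by Landen's transformation, which gives `λ(2) = 4√2 (√2 + 1)²`.
-/

section MonotoneLHopital

variable {f g f' g' : ℝ → ℝ} {a b : ℝ}

theorem exists_div_sub_eq_deriv_div_deriv (hab : a < b)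
    (hf : ContinuousOn f (Icc a b)) (hf' : ∀ x ∈ Ioo a b, HasDerivAt f (f' x) x)
    (hg : ContinuousOn g (Icc a b)) (hg' : ∀ x ∈ Ioo a b, HasDerivAt g (g' x) x)
    (hg'_ne : ∀ x ∈ Ioo a b, g' x ≠ 0) :
    ∃ ξ ∈ Ioo a b, (f b - f a) / (g b - g a) = f' ξ / g' ξ := by
  obtain ⟨ξ, hξ, hratio⟩ := exists_ratio_hasDerivAt_eq_ratio_slope f f' hab hf hf' g g' hg hg'
  have hg_ne : g b - g a ≠ 0 := by
    obtain ⟨η, hη, hslope⟩ := exists_hasDerivAt_eq_slope g g' hab hg hg'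
    intro h
    exact hg'_ne η hη (by rw [hslope, h, zero_div])
  exact ⟨ξ, hξ, by rw [div_eq_div_iff hg_ne (hg'_ne ξ hξ), ← hratio, mul_comm]⟩

theorem strictMonoOn_div_of_strictMonoOn_deriv_div_deriv
    (hf : ContinuousOn f (Ici a)) (hf' : ∀ x ∈ Ioi a, HasDerivAt f (f' x) x)
    (hg : ContinuousOn g (Ici a)) (hg' : ∀ x ∈ Ioi a, HasDerivAt g (g' x) x)
    (hg'_pos : ∀ x ∈ Ioi a, 0 < g' x) (hmono : StrictMonoOn (fun x ↦ f' x / g' x) (Ioi a)) :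
    StrictMonoOn (fun x ↦ (f x - f a) / (g x - g a)) (Ioi a) := by
  have hg_mono : StrictMonoOn g (Ici a) :=
    strictMonoOn_of_hasDerivWithinAt_pos (convex_Ici a) hg
      (by simpa only [interior_Ici] using fun x hx ↦ (hg' x hx).hasDerivWithinAt)
      (by simpa only [interior_Ici] using hg'_pos)
  intro x (hx : a < x) y (hy : a < y) hxy
  have hgax : 0 < g x - g a := sub_pos.2 (hg_mono self_mem_Ici hx.le hx)
  have hgxy : 0 < g y - g x := sub_pos.2 (hg_mono hx.le hy.le hxy)
  obtain ⟨ξ, hξ, hfξ⟩ := exists_div_sub_eq_deriv_div_deriv hx (hf.mono Icc_subset_Ici_self)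
    (fun z hz ↦ hf' z hz.1) (hg.mono Icc_subset_Ici_self) (fun z hz ↦ hg' z hz.1)
    (fun z hz ↦ (hg'_pos z hz.1).ne')
  have hsub : Icc x y ⊆ Ici a := fun z hz ↦ hx.le.trans hz.1
  obtain ⟨η, hη, hfη⟩ := exists_div_sub_eq_deriv_div_deriv hxy (hf.mono hsub)
    (fun z hz ↦ hf' z (hx.trans hz.1)) (hg.mono hsub) (fun z hz ↦ hg' z (hx.trans hz.1))
    (fun z hz ↦ (hg'_pos z (hx.trans hz.1)).ne')
  have hslopes : (f x - f a) / (g x - g a) < (f y - f x) / (g y - g x) := by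
    rw [hfξ, hfη]
    exact hmono hξ.1 (hx.trans hη.1) (hξ.2.trans hη.1)
  -- The quotient at `y` is the mediant of these two slopes.
  rw [div_lt_div_iff₀ hgax hgxy] at hslopes
  rw [div_lt_div_iff₀ hgax (by linarith)]
  linarith

end MonotoneLHopital

section ParametricTaylor

variable {F : ℕ → ℝ → ℝ} {φ w : ℝ → ℝ} {a t : ℝ} {n : ℕ}

/-- The remainder of the Taylor polynomial of degree `n - 1` at `φ a` of a function given
parametrically: `F k t` stands for the value of its `k`-th derivative at the point `φ t`. -/
noncomputable def taylorRemainder (F : ℕ → ℝ → ℝ) (φ : ℝ → ℝ) (a : ℝ) (n : ℕ) (t : ℝ) : ℝ :=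
  F 0 t - ∑ k ∈ Finset.range n, F k a / k.factorial * (φ t - φ a) ^ k

/-- The Taylor remainder of a parametrically given function, divided by the power of the increment
that is of the same order. -/
noncomputable def taylorQuotient (F : ℕ → ℝ → ℝ) (φ : ℝ → ℝ) (a : ℝ) (n : ℕ) (t : ℝ) : ℝ :=
  taylorRemainder F φ a n t / (φ t - φ a) ^ n

theorem taylorRemainder_succ_self : taylorRemainder F φ a (n + 1) a = 0 := by
  simp [taylorRemainder, Finset.sum_range_succ']

theorem hasDerivAt_sub_pow_succ (hφ : HasDerivAt φ (w t) t) :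
    HasDerivAt (fun t ↦ (φ t - φ a) ^ (n + 1)) ((n + 1) * (φ t - φ a) ^ n * w t) t :=
  ((hφ.sub_const (φ a)).fun_pow (n + 1)).congr_deriv (by simp)

theorem hasDerivAt_taylorRemainder_succ (hφ : HasDerivAt φ (w t) t)
    (hF : HasDerivAt (F 0) (F 1 t * w t) t) :
    HasDerivAt (taylorRemainder F φ a (n + 1))
      (taylorRemainder (fun k ↦ F (k + 1)) φ a n t * w t) t := by
  unfold taylorRemainder
  simp only [Finset.sum_range_succ' _ n, pow_zero, mul_one, sub_mul, Finset.sum_mul]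
  refine hF.fun_sub (.add_const _ (.fun_sum fun k _ ↦ ?_))
  refine ((hasDerivAt_sub_pow_succ hφ).const_mul (F (k + 1) a / (k + 1).factorial)).congr_deriv ?_
  rw [Nat.factorial_succ]
  push_cast
  field_simp

theorem continuousOn_taylorRemainder {s : Set ℝ} (hφ : ContinuousOn φ s)
    (hF : ContinuousOn (F 0) s) : ContinuousOn (taylorRemainder F φ a n) s := by
  unfold taylorRemainder
  fun_prop

theorem taylorQuotient_succ_eq_div_sub :
    taylorQuotient F φ a (n + 1) t =
      (taylorRemainder F φ a (n + 1) t - taylorRemainder F φ a (n + 1) a) /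
        ((φ t - φ a) ^ (n + 1) - (φ a - φ a) ^ (n + 1)) := by
  simp [taylorQuotient, taylorRemainder_succ_self]

theorem taylorRemainder_mul_div_pow_mul (hw : w t ≠ 0) :
    taylorRemainder F φ a n t * w t / ((n + 1) * (φ t - φ a) ^ n * w t) =
      taylorQuotient F φ a n t / (n + 1) := by
  rw [mul_div_mul_right _ _ hw, taylorQuotient, div_div, mul_comm]

theorem sub_pos_of_hasDerivAt_pos (hφ : ContinuousOn φ (Ici a))
    (hφ' : ∀ t ∈ Ioi a, HasDerivAt φ (w t) t) (hw : ∀ t ∈ Ioi a, 0 < w t) (ht : t ∈ Ioi a) :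
    0 < φ t - φ a :=
  sub_pos.2 <| strictMonoOn_of_hasDerivWithinAt_pos (convex_Ici a) hφ
    (by simpa only [interior_Ici] using fun t ht ↦ (hφ' t ht).hasDerivWithinAt)
    (by simpa only [interior_Ici] using hw) self_mem_Ici (Ioi_subset_Ici_self ht) ht

theorem strictMonoOn_taylorQuotient (hφ : ContinuousOn φ (Ici a))
    (hφ' : ∀ t ∈ Ioi a, HasDerivAt φ (w t) t) (hw : ∀ t ∈ Ioi a, 0 < w t)
    (hF : ∀ k < n, ContinuousOn (F k) (Ici a))
    (hF' : ∀ k < n, ∀ t ∈ Ioi a, HasDerivAt (F k) (F (k + 1) t * w t) t)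
    (hmono : StrictMonoOn (F n) (Ioi a)) : StrictMonoOn (taylorQuotient F φ a n) (Ioi a) := by
  induction n generalizing F with
  | zero =>
    exact hmono.congr fun t _ ↦ by simp [taylorQuotient, taylorRemainder]
  | succ n ih =>
    have ih_mono : StrictMonoOn (taylorQuotient (fun k ↦ F (k + 1)) φ a n) (Ioi a) :=
      ih (fun k hk ↦ hF (k + 1) (by lia)) (fun k hk ↦ hF' (k + 1) (by lia)) hmono
    refine (strictMonoOn_div_of_strictMonoOn_deriv_div_deriv
      (continuousOn_taylorRemainder hφ (hF 0 n.succ_pos))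
      (fun t ht ↦ hasDerivAt_taylorRemainder_succ (hφ' t ht) (hF' 0 n.succ_pos t ht))
      (by fun_prop) (fun t ht ↦ hasDerivAt_sub_pow_succ (hφ' t ht)) (fun t ht ↦ ?_) ?_).congr
      fun t _ ↦ taylorQuotient_succ_eq_div_sub.symm
    · have := sub_pos_of_hasDerivAt_pos hφ hφ' hw ht
      have := hw t ht
      positivity
    · refine StrictMonoOn.congr (fun s hs t ht hst ↦ ?_)
        fun t ht ↦ (taylorRemainder_mul_div_pow_mul (hw t ht).ne').symm
      exact div_lt_div_of_pos_right (ih_mono hs ht hst) n.cast_add_one_pos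

theorem lt_taylorQuotient (hφ : ContinuousOn φ (Ici a))
    (hφ' : ∀ t ∈ Ioi a, HasDerivAt φ (w t) t) (hw : ∀ t ∈ Ioi a, 0 < w t)
    (hF : ∀ k < n, ContinuousOn (F k) (Ici a))
    (hF' : ∀ k < n, ∀ t ∈ Ioi a, HasDerivAt (F k) (F (k + 1) t * w t) t)
    (hlt : ∀ t ∈ Ioi a, F n a < F n t) (ht : t ∈ Ioi a) :
    F n a / n.factorial < taylorQuotient F φ a n t := by
  induction n generalizing F t with
  | zero => simpa [taylorQuotient, taylorRemainder] using hlt t ht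
  | succ n ih =>
    obtain ⟨ξ, hξ, hquot⟩ := exists_div_sub_eq_deriv_div_deriv ht
      ((continuousOn_taylorRemainder hφ (hF 0 n.succ_pos)).mono Icc_subset_Ici_self)
      (fun s hs ↦ hasDerivAt_taylorRemainder_succ (n := n) (a := a) (hφ' s hs.1)
        (hF' 0 n.succ_pos s hs.1))
      (g := fun s ↦ (φ s - φ a) ^ (n + 1)) ((by fun_prop : ContinuousOn _ (Ici a)).mono
        Icc_subset_Ici_self) (fun s hs ↦ hasDerivAt_sub_pow_succ (hφ' s hs.1))
      fun s hs ↦ by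
        have := sub_pos_of_hasDerivAt_pos hφ hφ' hw hs.1
        have := hw s hs.1
        positivity
    have ih_lt : F (n + 1) a / n.factorial < taylorQuotient (fun k ↦ F (k + 1)) φ a n ξ :=
      ih (fun k hk ↦ hF (k + 1) (by lia)) (fun k hk ↦ hF' (k + 1) (by lia)) hlt hξ.1
    calc F (n + 1) a / (n + 1).factorial = F (n + 1) a / n.factorial / (n + 1) := by
          rw [Nat.factorial_succ, div_div]; push_cast; ring
      _ < taylorQuotient (fun k ↦ F (k + 1)) φ a n ξ / (n + 1) := by gcongr
      _ = taylorQuotient F φ a (n + 1) t := by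
          rw [taylorQuotient_succ_eq_div_sub, hquot,
            taylorRemainder_mul_div_pow_mul (hw ξ hξ.1).ne']

end ParametricTaylor

theorem hasDerivAt_intervalIntegral_of_continuousOn {E : Type*} [NormedAddCommGroup E]
    [NormedSpace ℝ E] {F F' : ℝ → ℝ → E} {U : Set ℝ} {a b x₀ : ℝ} (hU : IsOpen U) (hx₀ : x₀ ∈ U)
    (hF : ∀ x ∈ U, ContinuousOn (F x) (uIcc a b))
    (hF' : ContinuousOn (Function.uncurry F') (U ×ˢ uIcc a b))
    (hderiv : ∀ x ∈ U, ∀ θ ∈ uIcc a b, HasDerivAt (F · θ) (F' x θ) x) :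
    HasDerivAt (fun x ↦ ∫ θ in a..b, F x θ) (∫ θ in a..b, F' x₀ θ) x₀ := by
  obtain ⟨ε, hε, hball⟩ := Metric.nhds_basis_closedBall.mem_iff.1 (hU.mem_nhds hx₀)
  obtain ⟨C, hC⟩ := ((isCompact_closedBall x₀ ε).prod isCompact_uIcc).exists_bound_of_continuousOn
    (hF'.mono (prod_mono_left hball))
  have hF'_x₀ : ContinuousOn (F' x₀) (uIcc a b) :=
    hF'.comp (by fun_prop : Continuous fun θ ↦ (x₀, θ)).continuousOn fun θ hθ ↦ ⟨hx₀, hθ⟩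
  refine (intervalIntegral.hasDerivAt_integral_of_dominated_loc_of_deriv_le
    (bound := fun _ ↦ C) (Metric.closedBall_mem_nhds x₀ hε) ?_ (hF x₀ hx₀).intervalIntegrable
    hF'_x₀.intervalIntegrable.def'.aestronglyMeasurable ?_ intervalIntegrable_const ?_).2
  · filter_upwards [hU.mem_nhds hx₀] with x hx
    exact (hF x hx).intervalIntegrable.def'.aestronglyMeasurable
  · exact .of_forall fun θ hθ x hx ↦ hC (x, θ) ⟨hx, uIoc_subset_uIcc hθ⟩
  · exact .of_forall fun θ hθ x hx ↦ hderiv x (hball hx) θ (uIoc_subset_uIcc hθ)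

section EllipticIntegrals

variable {s m : ℝ}

/-- The family of complete elliptic integrals `∫₀^{π/2} (1 - m sin² θ) ^ s dθ`, as functions of the
parameter `m = r²`. -/
noncomputable def ellipticIntegral (s m : ℝ) : ℝ :=
  ∫ θ in (0 : ℝ)..Real.pi / 2, (1 - m * Real.sin θ ^ 2) ^ s

/-- The complete elliptic integral of the first kind as a function of the parameter `m = r²`. -/
noncomputable abbrev ellipticK : ℝ → ℝ := ellipticIntegral (-(1 / 2))

/-- The complete elliptic integral of the second kind as a function of the parameter `m = r²`. -/
noncomputable abbrev ellipticE : ℝ → ℝ := ellipticIntegral (1 / 2)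

theorem one_sub_mul_sin_sq_pos (hm : m < 1) (θ : ℝ) : 0 < 1 - m * Real.sin θ ^ 2 := by
  rcases le_total m 0 with h | h <;> nlinarith [Real.sin_sq_le_one θ, sq_nonneg (Real.sin θ)]

theorem continuous_one_sub_mul_sin_sq_rpow (hm : m < 1) (s : ℝ) :
    Continuous fun θ ↦ (1 - m * Real.sin θ ^ 2) ^ s :=
  Continuous.rpow_const (by fun_prop) fun θ ↦ .inl (one_sub_mul_sin_sq_pos hm θ).ne'

theorem intervalIntegrable_one_sub_mul_sin_sq_rpow (hm : m < 1) (s a b : ℝ) :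
    IntervalIntegrable (fun θ ↦ (1 - m * Real.sin θ ^ 2) ^ s) MeasureTheory.volume a b :=
  (continuous_one_sub_mul_sin_sq_rpow hm s).intervalIntegrable a b

theorem ellipticIntegral_pos (s : ℝ) (hm : m < 1) : 0 < ellipticIntegral s m :=
  intervalIntegral.intervalIntegral_pos_of_pos
    (intervalIntegrable_one_sub_mul_sin_sq_rpow hm s _ _)
    (fun θ ↦ Real.rpow_pos_of_pos (one_sub_mul_sin_sq_pos hm θ) s) (by positivity)

theorem monotoneOn_ellipticIntegral (hs : s ≤ 0) : MonotoneOn (ellipticIntegral s) (Iio 1) := by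
  intro m hm n hn hmn
  refine intervalIntegral.integral_mono_on (by positivity)
    (intervalIntegrable_one_sub_mul_sin_sq_rpow hm s _ _)
    (intervalIntegrable_one_sub_mul_sin_sq_rpow hn s _ _) fun θ _ ↦
    Real.rpow_le_rpow_of_nonpos (one_sub_mul_sin_sq_pos hn θ) ?_ hs
  gcongr

theorem ellipticIntegral_le (hs : s ≤ 0) (hm₀ : 0 ≤ m) (hm : m < 1) :
    ellipticIntegral s m ≤ Real.pi / 2 * (1 - m) ^ s := by
  have hle : ellipticIntegral s m ≤ ∫ _ in (0 : ℝ)..Real.pi / 2, (1 - m) ^ s := by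
    refine intervalIntegral.integral_mono_on (by positivity)
      (intervalIntegrable_one_sub_mul_sin_sq_rpow hm s _ _) intervalIntegrable_const fun θ _ ↦
      Real.rpow_le_rpow_of_nonpos (sub_pos.2 hm) ?_ hs
    exact sub_le_sub_left (mul_le_of_le_one_right hm₀ (Real.sin_sq_le_one θ)) 1
  simpa using hle

theorem continuous_ellipticIntegral (hs : 0 ≤ s) : Continuous (ellipticIntegral s) :=
  intervalIntegral.continuous_parametric_intervalIntegral_of_continuous'
    (Continuous.rpow_const (by fun_prop) fun _ ↦ .inr hs) _ _

@[simp]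
theorem ellipticIntegral_zero_right (s : ℝ) : ellipticIntegral s 0 = Real.pi / 2 := by
  simp [ellipticIntegral]

theorem ellipticE_one : ellipticE 1 = 1 := by
  have hcos : ∀ θ ∈ uIcc 0 (Real.pi / 2),
      (1 - 1 * Real.sin θ ^ 2) ^ (1 / 2 : ℝ) = Real.cos θ := by
    intro θ hθ
    rw [uIcc_of_le (by positivity)] at hθ
    rw [one_mul, ← Real.cos_sq', ← Real.sqrt_eq_rpow,
      Real.sqrt_sq (Real.cos_nonneg_of_mem_Icc ⟨by linarith [hθ.1, Real.pi_pos], hθ.2⟩)]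
  rw [ellipticE, ellipticIntegral, intervalIntegral.integral_congr hcos]
  simp

theorem hasDerivAt_ellipticIntegral_integral (s : ℝ) (hm : m < 1) :
    HasDerivAt (ellipticIntegral s)
      (∫ θ in (0 : ℝ)..Real.pi / 2,
        -(s * Real.sin θ ^ 2 * (1 - m * Real.sin θ ^ 2) ^ (s - 1))) m := by
  refine hasDerivAt_intervalIntegral_of_continuousOn
    (F := fun m θ ↦ (1 - m * Real.sin θ ^ 2) ^ s)
    (F' := fun m θ ↦ -(s * Real.sin θ ^ 2 * (1 - m * Real.sin θ ^ 2) ^ (s - 1)))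
    isOpen_Iio hm
    (fun x hx ↦ (continuous_one_sub_mul_sin_sq_rpow hx s).continuousOn) ?_ fun x hx θ _ ↦ ?_
  · refine ContinuousOn.neg (ContinuousOn.mul (by fun_prop)
      (ContinuousOn.rpow_const (by fun_prop) ?_))
    rintro ⟨x, θ⟩ ⟨hx, -⟩
    exact .inl (one_sub_mul_sin_sq_pos hx θ).ne'
  · have hΔ : HasDerivAt (fun x ↦ 1 - x * Real.sin θ ^ 2) (-Real.sin θ ^ 2) x := by
      simpa using ((hasDerivAt_id x).mul_const (Real.sin θ ^ 2)).const_sub 1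
    exact (hΔ.rpow_const (.inl (one_sub_mul_sin_sq_pos hx θ).ne')).congr_deriv (by ring)

theorem continuousOn_ellipticIntegral (s : ℝ) : ContinuousOn (ellipticIntegral s) (Iio 1) :=
  fun _ hm ↦ (hasDerivAt_ellipticIntegral_integral s hm).continuousAt.continuousWithinAt

theorem hasDerivAt_ellipticIntegral (s : ℝ) (hm₀ : m ≠ 0) (hm : m < 1) :
    HasDerivAt (ellipticIntegral s)
      (s * (ellipticIntegral s m - ellipticIntegral (s - 1) m) / m) m := by
  refine (hasDerivAt_ellipticIntegral_integral s hm).congr_deriv ?_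
  rw [ellipticIntegral, ellipticIntegral,
    ← intervalIntegral.integral_sub (intervalIntegrable_one_sub_mul_sin_sq_rpow hm s _ _)
      (intervalIntegrable_one_sub_mul_sin_sq_rpow hm (s - 1) _ _),
    ← intervalIntegral.integral_const_mul, ← intervalIntegral.integral_div]
  refine intervalIntegral.integral_congr fun θ _ ↦ ?_
  have hpow : (1 - m * Real.sin θ ^ 2) ^ s =
      (1 - m * Real.sin θ ^ 2) ^ (s - 1) * (1 - m * Real.sin θ ^ 2) := by
    rw [← Real.rpow_add_one (one_sub_mul_sin_sq_pos hm θ).ne', sub_add_cancel]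
  simp only [hpow]
  field_simp
  ring

theorem ellipticIntegral_recurrence (s : ℝ) (hm : m < 1) :
    2 * (s + 1) * ellipticIntegral (s + 1) m + (m - 2) * (1 + 2 * s) * ellipticIntegral s m +
      2 * s * (1 - m) * ellipticIntegral (s - 1) m = 0 := by
  have hderiv : ∀ θ ∈ uIcc 0 (Real.pi / 2),
      HasDerivAt (fun θ ↦ m * (Real.sin θ * Real.cos θ * (1 - m * Real.sin θ ^ 2) ^ s))
        (2 * (s + 1) * (1 - m * Real.sin θ ^ 2) ^ (s + 1) +
          (m - 2) * (1 + 2 * s) * (1 - m * Real.sin θ ^ 2) ^ s +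
          2 * s * (1 - m) * (1 - m * Real.sin θ ^ 2) ^ (s - 1)) θ := by
    intro θ _
    have hΔ₀ := (one_sub_mul_sin_sq_pos hm θ).ne'
    have hΔ := (((Real.hasDerivAt_sin θ).fun_pow 2).const_mul m).const_sub 1
    refine ((((Real.hasDerivAt_sin θ).fun_mul (Real.hasDerivAt_cos θ)).fun_mul
      (hΔ.rpow_const (p := s) (.inl hΔ₀))).const_mul m).congr_deriv ?_
    rw [Real.rpow_add_one hΔ₀, Real.rpow_sub_one hΔ₀]
    have hcos : Real.cos θ * Real.cos θ = 1 - Real.sin θ ^ 2 := by rw [← sq, Real.cos_sq']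
    field_simp
    grobner
  have hint := fun p ↦ intervalIntegrable_one_sub_mul_sin_sq_rpow hm p 0 (Real.pi / 2)
  have h := intervalIntegral.integral_eq_sub_of_hasDerivAt hderiv
    ((((hint _).const_mul _).add ((hint _).const_mul _)).add ((hint _).const_mul _))
  rw [intervalIntegral.integral_add (((hint _).const_mul _).add ((hint _).const_mul _))
      ((hint _).const_mul _),
    intervalIntegral.integral_add ((hint _).const_mul _) ((hint _).const_mul _)] at h
  simpa [ellipticIntegral] using h

theorem hasDerivAt_ellipticE (hm₀ : m ≠ 0) (hm : m < 1) :
    HasDerivAt ellipticE ((ellipticE m - ellipticK m) / (2 * m)) m := by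
  refine (hasDerivAt_ellipticIntegral (1 / 2) hm₀ hm).congr_deriv ?_
  rw [ellipticE, ellipticK, show (1 / 2 - 1 : ℝ) = -(1 / 2) by norm_num]
  ring

/-- The derivative `m (1 - m) dK/dm` of the complete elliptic integral of the first kind with
respect to the logistic coordinate `log (m / (1 - m))`. -/
noncomputable def logitDerivK (m : ℝ) : ℝ :=
  (ellipticE m - (1 - m) * ellipticK m) / 2

theorem hasDerivAt_ellipticK (hm₀ : m ≠ 0) (hm : m < 1) :
    HasDerivAt ellipticK (logitDerivK m / (m * (1 - m))) m := by
  have hm1 : 1 - m ≠ 0 := (sub_pos.2 hm).ne'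
  refine (hasDerivAt_ellipticIntegral (-(1 / 2)) hm₀ hm).congr_deriv ?_
  have hrec := ellipticIntegral_recurrence (-(1 / 2)) hm
  rw [show (-(1 / 2) + 1 : ℝ) = 1 / 2 by norm_num] at hrec
  rw [logitDerivK, ellipticE, ellipticK]
  generalize ellipticIntegral (-(1 / 2) - 1) m = J at hrec ⊢
  field_simp
  linear_combination -hrec

theorem hasDerivAt_logitDerivK (hm₀ : m ≠ 0) (hm : m < 1) :
    HasDerivAt logitDerivK (ellipticK m / 4) m := by
  have hm1 : 1 - m ≠ 0 := (sub_pos.2 hm).ne'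
  refine (((hasDerivAt_ellipticE hm₀ hm).fun_sub (((hasDerivAt_id' m).const_sub 1).fun_mul
    (hasDerivAt_ellipticK hm₀ hm))).div_const 2).congr_deriv ?_
  rw [logitDerivK]
  field_simp
  ring

theorem continuousOn_logitDerivK : ContinuousOn logitDerivK (Iio 1) := by
  have hE := (continuous_ellipticIntegral one_half_pos.le).continuousOn (s := Iio 1)
  have hK := continuousOn_ellipticIntegral (-(1 / 2))
  unfold logitDerivK
  fun_prop

theorem logitDerivK_mem_Ioc (hm₀ : 0 < m) (hm : m < 1) :
    logitDerivK m ∈ Ioc 0 (m * ellipticK m / 4) := by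
  obtain ⟨ξ, hξ, hslope⟩ := exists_hasDerivAt_eq_slope logitDerivK (fun m ↦ ellipticK m / 4) hm₀
    (continuousOn_logitDerivK.mono fun x hx ↦ hx.2.trans_lt hm)
    fun x hx ↦ hasDerivAt_logitDerivK hx.1.ne' (hx.2.trans hm)
  have hzero : logitDerivK 0 = 0 := by simp [logitDerivK]
  rw [hzero, sub_zero, sub_zero, eq_div_iff hm₀.ne'] at hslope
  have hξ1 : ξ < 1 := hξ.2.trans hm
  have hpos : 0 < ellipticK ξ := ellipticIntegral_pos _ hξ1
  have hle : ellipticK ξ ≤ ellipticK m :=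
    monotoneOn_ellipticIntegral (by norm_num) hξ1 hm hξ.2.le
  rw [← hslope]
  exact ⟨by positivity, by nlinarith⟩

end EllipticIntegrals

section LegendreRelation

open Topology

variable {m : ℝ}

/-- The Wronskian of the solutions `K(m)` and `K(1 - m)` of Legendre's differential equation, with
respect to the logistic coordinate `log (m / (1 - m))`. -/
noncomputable def legendreWronskian (m : ℝ) : ℝ :=
  ellipticK m * logitDerivK (1 - m) + ellipticK (1 - m) * logitDerivK m

theorem hasDerivAt_legendreWronskian (hm : m ∈ Ioo 0 1) : HasDerivAt legendreWronskian 0 m := by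
  have hm₀ : m ≠ 0 := hm.1.ne'
  have hm₁ : 1 - m ≠ 0 := (sub_pos.2 hm.2).ne'
  have hlt : 1 - m < 1 := sub_lt_self 1 hm.1
  have hreflect : HasDerivAt (fun x : ℝ ↦ 1 - x) (-1) m := (hasDerivAt_id' m).const_sub 1
  refine (((hasDerivAt_ellipticK hm₀ hm.2).fun_mul
    ((hasDerivAt_logitDerivK hm₁ hlt).comp m hreflect)).add
    (((hasDerivAt_ellipticK hm₁ hlt).comp m hreflect).fun_mul
      (hasDerivAt_logitDerivK hm₀ hm.2))).congr_deriv ?_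
  simp only [Function.comp_apply, sub_sub_cancel]
  field_simp
  ring

theorem tendsto_ellipticK_nhdsGT_zero :
    Tendsto ellipticK (𝓝[>] 0) (𝓝 (Real.pi / 2)) := by
  have hcont : ContinuousAt ellipticK 0 :=
    (continuousOn_ellipticIntegral _).continuousAt (Iio_mem_nhds one_pos)
  simpa using hcont.tendsto.mono_left nhdsWithin_le_nhds

theorem tendsto_mul_ellipticK_one_sub_nhdsGT_zero :
    Tendsto (fun m ↦ m * ellipticK (1 - m)) (𝓝[>] 0) (𝓝 0) := by
  have hsqrt : Tendsto (fun m : ℝ ↦ Real.pi / 2 * √m) (𝓝[>] 0) (𝓝 0) := by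
    simpa using (((by fun_prop : Continuous fun m : ℝ ↦ Real.pi / 2 * √m).tendsto 0).mono_left
      nhdsWithin_le_nhds)
  have hIoo : ∀ᶠ m in 𝓝[>] (0 : ℝ), m ∈ Ioo (0 : ℝ) 1 := Ioo_mem_nhdsGT one_pos
  refine squeeze_zero' ?_ ?_ hsqrt <;> filter_upwards [hIoo] with m hm
  · exact mul_nonneg hm.1.le (ellipticIntegral_pos _ (sub_lt_self 1 hm.1)).le
  · calc m * ellipticK (1 - m) ≤ m * (Real.pi / 2 * (1 - (1 - m)) ^ (-(1 / 2) : ℝ)) := by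
          have := ellipticIntegral_le (s := -(1 / 2)) (by norm_num) (sub_pos.2 hm.2).le
            (sub_lt_self 1 hm.1)
          have := hm.1.le
          gcongr
      _ = Real.pi / 2 * (m * m ^ (-(1 / 2) : ℝ)) := by rw [sub_sub_cancel]; ring
      _ = Real.pi / 2 * √m := by
          rw [← Real.rpow_one_add' hm.1.le (by norm_num), Real.sqrt_eq_rpow]
          norm_num

theorem tendsto_logitDerivK_one_sub_nhdsGT_zero :
    Tendsto (fun m ↦ logitDerivK (1 - m)) (𝓝[>] 0) (𝓝 (1 / 2)) := by
  have hcont : Continuous fun m ↦ ellipticE (1 - m) :=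
    (continuous_ellipticIntegral one_half_pos.le).comp (by fun_prop)
  have hE : Tendsto (fun m ↦ ellipticE (1 - m)) (𝓝[>] 0) (𝓝 1) := by
    simpa [ellipticE_one] using (hcont.tendsto 0).mono_left nhdsWithin_le_nhds
  simpa [logitDerivK] using (hE.sub tendsto_mul_ellipticK_one_sub_nhdsGT_zero).div_const 2

theorem tendsto_ellipticK_one_sub_mul_logitDerivK_nhdsGT_zero :
    Tendsto (fun m ↦ ellipticK (1 - m) * logitDerivK m) (𝓝[>] 0) (𝓝 0) := by
  have hbound : Tendsto (fun m ↦ m * ellipticK (1 - m) * ellipticK m / 4) (𝓝[>] 0) (𝓝 0) := by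
    simpa using (tendsto_mul_ellipticK_one_sub_nhdsGT_zero.mul
      tendsto_ellipticK_nhdsGT_zero).div_const 4
  have hIoo : ∀ᶠ m in 𝓝[>] (0 : ℝ), m ∈ Ioo (0 : ℝ) 1 := Ioo_mem_nhdsGT one_pos
  refine squeeze_zero' ?_ ?_ hbound <;> filter_upwards [hIoo] with m hm
  all_goals
    have hK : 0 < ellipticK (1 - m) := ellipticIntegral_pos _ (sub_lt_self 1 hm.1)
    have hZ := logitDerivK_mem_Ioc hm.1 hm.2
  · exact mul_nonneg hK.le hZ.1.le
  · linarith [mul_le_mul_of_nonneg_left hZ.2 hK.le]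

theorem tendsto_legendreWronskian_nhdsGT_zero :
    Tendsto legendreWronskian (𝓝[>] 0) (𝓝 (Real.pi / 4)) := by
  rw [show Real.pi / 4 = Real.pi / 2 * (1 / 2) + 0 by ring]
  exact (tendsto_ellipticK_nhdsGT_zero.mul tendsto_logitDerivK_one_sub_nhdsGT_zero).add
    tendsto_ellipticK_one_sub_mul_logitDerivK_nhdsGT_zero

theorem legendre_relation (hm : m ∈ Ioo 0 1) :
    ellipticK m * logitDerivK (1 - m) + ellipticK (1 - m) * logitDerivK m = Real.pi / 4 := by
  refine tendsto_nhds_unique (tendsto_const_nhds.congr' ?_) tendsto_legendreWronskian_nhdsGT_zero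
  filter_upwards [Ioo_mem_nhdsGT one_pos] with x hx
  exact isOpen_Ioo.is_const_of_deriv_eq_zero isPreconnected_Ioo
    (fun y hy ↦ (hasDerivAt_legendreWronskian hy).differentiableAt.differentiableWithinAt)
    (fun y hy ↦ (hasDerivAt_legendreWronskian hy).deriv) hm hx

end LegendreRelation

section Landen

variable {r θ : ℝ}

/-- The argument of the complete elliptic integral `K(4r / (1 + r)²)` as a function of that of
`K(r²)` in Landen's ascending transformation. -/
noncomputable def landenAngle (r θ : ℝ) : ℝ :=
  Real.arcsin ((1 + r) * Real.sin θ / (1 + r * Real.sin θ ^ 2))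

theorem sin_landenAngle (hr : r ∈ Ioo 0 1) (hθ : θ ∈ Icc 0 (Real.pi / 2)) :
    Real.sin (landenAngle r θ) = (1 + r) * Real.sin θ / (1 + r * Real.sin θ ^ 2) := by
  have hr₀ := hr.1
  have hsin := Real.sin_nonneg_of_nonneg_of_le_pi hθ.1 (by linarith [hθ.2, Real.pi_pos])
  have hsin_le := Real.sin_le_one θ
  refine Real.sin_arcsin ((neg_one_lt_zero.le).trans (by positivity)) ?_
  rw [div_le_one (by positivity)]
  nlinarith [mul_nonneg (sub_nonneg.2 hsin_le) (by nlinarith [hr.2] : 0 ≤ 1 - r * Real.sin θ)]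

theorem one_sub_mul_landen_sq (hr : 0 < r) :
    1 - 4 * r / (1 + r) ^ 2 * ((1 + r) * Real.sin θ / (1 + r * Real.sin θ ^ 2)) ^ 2 =
      ((1 - r * Real.sin θ ^ 2) / (1 + r * Real.sin θ ^ 2)) ^ 2 := by
  have : 0 < 1 + r * Real.sin θ ^ 2 := by positivity
  field_simp
  ring

theorem one_sub_landen_sq (hr : r ∈ Ioo 0 1) :
    1 - ((1 + r) * Real.sin θ / (1 + r * Real.sin θ ^ 2)) ^ 2 =
      (Real.cos θ * √(1 - r ^ 2 * Real.sin θ ^ 2) / (1 + r * Real.sin θ ^ 2)) ^ 2 := by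
  have hr₀ := hr.1
  have hΔ := one_sub_mul_sin_sq_pos (show r ^ 2 < 1 by nlinarith [hr.1, hr.2]) θ
  have : 0 < 1 + r * Real.sin θ ^ 2 := by positivity
  rw [div_pow (Real.cos θ * _), mul_pow, Real.sq_sqrt hΔ.le, Real.cos_sq']
  field_simp
  ring

theorem hasDerivAt_landenAngle (hr : r ∈ Ioo 0 1) (hθ : θ ∈ Ioo 0 (Real.pi / 2)) :
    HasDerivAt (landenAngle r)
      ((1 + r) * (1 - r * Real.sin θ ^ 2) / (1 + r * Real.sin θ ^ 2) *
        (√(1 - r ^ 2 * Real.sin θ ^ 2))⁻¹) θ := by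
  have hr₀ := hr.1
  have hcos : 0 < Real.cos θ := Real.cos_pos_of_mem_Ioo ⟨by linarith [hθ.1, Real.pi_pos], hθ.2⟩
  have hden : 0 < 1 + r * Real.sin θ ^ 2 := by positivity
  have hsqrt := Real.sqrt_pos.2
    (one_sub_mul_sin_sq_pos (show r ^ 2 < 1 by nlinarith [hr.1, hr.2]) θ)
  have hsq := one_sub_landen_sq (θ := θ) hr
  have hpos : 0 < 1 - ((1 + r) * Real.sin θ / (1 + r * Real.sin θ ^ 2)) ^ 2 := by
    rw [hsq]
    positivity
  have harg : HasDerivAt (fun θ ↦ (1 + r) * Real.sin θ / (1 + r * Real.sin θ ^ 2))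
      ((1 + r) * Real.cos θ * (1 - r * Real.sin θ ^ 2) / (1 + r * Real.sin θ ^ 2) ^ 2) θ := by
    refine (((Real.hasDerivAt_sin θ).const_mul (1 + r)).fun_div
      ((((Real.hasDerivAt_sin θ).fun_pow 2).const_mul r).const_add 1) hden.ne').congr_deriv ?_
    push_cast
    ring
  refine ((Real.hasDerivAt_arcsin (by nlinarith) (by nlinarith)).comp θ harg).congr_deriv ?_
  rw [hsq, Real.sqrt_sq (by positivity)]
  field_simp

theorem rpow_neg_half_eq_inv_sqrt {x : ℝ} (hx : 0 ≤ x) : x ^ (-(1 / 2) : ℝ) = (√x)⁻¹ := by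
  rw [Real.rpow_neg hx, Real.sqrt_eq_rpow]

theorem landen_integrand_eq (hr : r ∈ Ioo 0 1) (hθ : θ ∈ Icc 0 (Real.pi / 2)) :
    (1 - 4 * r / (1 + r) ^ 2 * Real.sin (landenAngle r θ) ^ 2) ^ (-(1 / 2) : ℝ) *
        ((1 + r) * (1 - r * Real.sin θ ^ 2) / (1 + r * Real.sin θ ^ 2) *
          (√(1 - r ^ 2 * Real.sin θ ^ 2))⁻¹) =
      (1 + r) * (1 - r ^ 2 * Real.sin θ ^ 2) ^ (-(1 / 2) : ℝ) := by
  have hr₀ := hr.1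
  have hnum := one_sub_mul_sin_sq_pos hr.2 θ
  have : 0 < 1 + r * Real.sin θ ^ 2 := by positivity
  have hΔ := one_sub_mul_sin_sq_pos (show r ^ 2 < 1 by nlinarith [hr.1, hr.2]) θ
  rw [sin_landenAngle hr hθ, one_sub_mul_landen_sq hr₀, rpow_neg_half_eq_inv_sqrt (sq_nonneg _),
    rpow_neg_half_eq_inv_sqrt hΔ.le, Real.sqrt_sq (by positivity)]
  have := hnum.ne'
  field_simp

theorem ellipticK_landen (hr : r ∈ Ioo 0 1) :
    ellipticK (4 * r / (1 + r) ^ 2) = (1 + r) * ellipticK (r ^ 2) := by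
  have hr₀ := hr.1
  have hr1 : r ^ 2 < 1 := by nlinarith [hr.1, hr.2]
  have hM : 4 * r / (1 + r) ^ 2 < 1 := by
    rw [div_lt_one (by positivity)]
    nlinarith [sq_pos_of_pos (sub_pos.2 hr.2)]
  have hden : ∀ θ, 1 + r * Real.sin θ ^ 2 ≠ 0 := fun θ ↦ by positivity
  have hsqrt : ∀ θ, √(1 - r ^ 2 * Real.sin θ ^ 2) ≠ 0 := fun θ ↦
    (Real.sqrt_pos.2 (one_sub_mul_sin_sq_pos hr1 θ)).ne'
  have hpi : (0 : ℝ) ≤ Real.pi / 2 := by positivity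
  have hsubst := intervalIntegral.integral_comp_mul_deriv'' (a := 0) (b := Real.pi / 2)
    (f := landenAngle r)
    (g := fun θ ↦ (1 - 4 * r / (1 + r) ^ 2 * Real.sin θ ^ 2) ^ (-(1 / 2) : ℝ))
    (Real.continuous_arcsin.comp (by fun_prop (disch := exact hden _))).continuousOn
    (fun θ hθ ↦ (hasDerivAt_landenAngle hr (by simpa [hpi] using hθ)).hasDerivWithinAt)
    (by fun_prop (disch := first | exact hden _ | exact hsqrt _))
    (continuous_one_sub_mul_sin_sq_rpow hM _).continuousOn
  have hzero : landenAngle r 0 = 0 := by simp [landenAngle]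
  have hright : landenAngle r (Real.pi / 2) = Real.pi / 2 := by
    simp [landenAngle, div_self (by positivity : 1 + r ≠ 0)]
  rw [hzero, hright] at hsubst
  rw [ellipticK, ellipticIntegral, ← hsubst, ellipticIntegral,
    ← intervalIntegral.integral_const_mul]
  exact intervalIntegral.integral_congr fun θ hθ ↦
    landen_integrand_eq hr (by rwa [uIcc_of_le hpi] at hθ)

theorem ellipticK_one_sub_div_landen (hr : r ∈ Ioo 0 1) :
    ellipticK (1 - ((1 - r) / (1 + r)) ^ 2) / ellipticK (((1 - r) / (1 + r)) ^ 2) =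
      2 * (ellipticK (r ^ 2) / ellipticK (1 - r ^ 2)) := by
  have hr₀ := hr.1
  have hr₁ := sub_pos.2 hr.2
  have hl : (1 - r) / (1 + r) ∈ Ioo (0 : ℝ) 1 :=
    ⟨by positivity, by rw [div_lt_one] <;> linarith⟩
  have hone : 1 - ((1 - r) / (1 + r)) ^ 2 = 4 * r / (1 + r) ^ 2 := by
    field_simp
    ring
  have hinvol : 4 * ((1 - r) / (1 + r)) / (1 + (1 - r) / (1 + r)) ^ 2 = 1 - r ^ 2 := by
    have hsum : 1 + (1 - r) / (1 + r) = 2 / (1 + r) := by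
      field_simp
      ring
    rw [hsum]
    field_simp
    ring
  have hK := ellipticK_landen hl
  rw [hinvol] at hK
  have : 0 < ellipticK (((1 - r) / (1 + r)) ^ 2) :=
    ellipticIntegral_pos _ (by nlinarith [hl.1, hl.2])
  rw [hone, ellipticK_landen hr, hK]
  field_simp
  ring

end Landen

section LogisticCoordinate

open Real (sigmoid sigmoid_neg sigmoid_pos sigmoid_lt_one sigmoid_zero)

variable {t : ℝ}

/-- The argument of the distortion function `λ` as a function of the logistic coordinate `t`, in
which `r² = eᵗ / (1 + eᵗ)`: it is the dilatation at which `λ` takes the value `eᵗ`. -/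
noncomputable def logisticDilatation (t : ℝ) : ℝ :=
  ellipticK (sigmoid t) / ellipticK (sigmoid (-t))

/-- The factor `v` for which `v · d/dt` is the derivative with respect to the dilatation, `t` being
the logistic coordinate. -/
noncomputable def logisticSpeed (t : ℝ) : ℝ :=
  4 / Real.pi * ellipticK (sigmoid (-t)) ^ 2

/-- Minus half the derivative `dv/dt` of `logisticSpeed`. -/
noncomputable def logisticSpeedDecay (t : ℝ) : ℝ :=
  4 / Real.pi * (ellipticK (sigmoid (-t)) * logitDerivK (sigmoid (-t)))

theorem ellipticK_sigmoid_pos (t : ℝ) : 0 < ellipticK (sigmoid t) :=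
  ellipticIntegral_pos _ (sigmoid_lt_one t)

theorem logisticSpeed_pos (t : ℝ) : 0 < logisticSpeed t := by
  have := ellipticK_sigmoid_pos (-t)
  have := Real.pi_pos
  unfold logisticSpeed
  positivity

theorem hasDerivAt_sigmoid_neg (t : ℝ) :
    HasDerivAt (fun t ↦ sigmoid (-t)) (-(sigmoid (-t) * (1 - sigmoid (-t)))) t :=
  ((Real.hasDerivAt_sigmoid (-t)).comp t (hasDerivAt_neg t)).congr_deriv (mul_neg_one _)

theorem hasDerivAt_ellipticK_sigmoid (t : ℝ) :
    HasDerivAt (fun t ↦ ellipticK (sigmoid t)) (logitDerivK (sigmoid t)) t := by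
  have hpos := sigmoid_pos t
  have hlt := sub_pos.2 (sigmoid_lt_one t)
  refine ((hasDerivAt_ellipticK hpos.ne' (sigmoid_lt_one t)).comp t
    (Real.hasDerivAt_sigmoid t)).congr_deriv ?_
  field_simp

theorem hasDerivAt_ellipticK_sigmoid_neg (t : ℝ) :
    HasDerivAt (fun t ↦ ellipticK (sigmoid (-t))) (-logitDerivK (sigmoid (-t))) t :=
  ((hasDerivAt_ellipticK_sigmoid (-t)).comp t (hasDerivAt_neg t)).congr_deriv (mul_neg_one _)

theorem hasDerivAt_logitDerivK_sigmoid_neg (t : ℝ) :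
    HasDerivAt (fun t ↦ logitDerivK (sigmoid (-t)))
      (-(sigmoid (-t) * (1 - sigmoid (-t)) / 4 * ellipticK (sigmoid (-t)))) t :=
  (HasDerivAt.comp (h₂ := logitDerivK) (h := fun t ↦ sigmoid (-t)) t
    (hasDerivAt_logitDerivK (sigmoid_pos (-t)).ne' (sigmoid_lt_one (-t)))
    (hasDerivAt_sigmoid_neg t)).congr_deriv (by ring)

theorem hasDerivAt_logisticDilatation (t : ℝ) :
    HasDerivAt logisticDilatation (logisticSpeed t)⁻¹ t := by
  have hK := ellipticK_sigmoid_pos (-t)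
  refine ((hasDerivAt_ellipticK_sigmoid t).fun_div (hasDerivAt_ellipticK_sigmoid_neg t)
    hK.ne').congr_deriv ?_
  have hlegendre := legendre_relation ⟨sigmoid_pos t, sigmoid_lt_one t⟩
  rw [← sigmoid_neg] at hlegendre
  rw [logisticSpeed, div_eq_iff (by positivity)]
  field_simp
  linear_combination 4 * hlegendre

theorem hasDerivAt_logisticSpeed (t : ℝ) :
    HasDerivAt logisticSpeed (-2 * logisticSpeedDecay t) t := by
  refine (((hasDerivAt_ellipticK_sigmoid_neg t).fun_pow 2).const_mul (4 / Real.pi)).congr_deriv ?_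
  rw [logisticSpeedDecay]
  push_cast
  ring

theorem hasDerivAt_logisticSpeedDecay (t : ℝ) :
    HasDerivAt logisticSpeedDecay
      (-(logisticSpeedDecay t ^ 2 / logisticSpeed t +
        sigmoid (-t) * (1 - sigmoid (-t)) / 4 * logisticSpeed t)) t := by
  have hK := ellipticK_sigmoid_pos (-t)
  refine (((hasDerivAt_ellipticK_sigmoid_neg t).fun_mul
    (hasDerivAt_logitDerivK_sigmoid_neg t)).const_mul (4 / Real.pi)).congr_deriv ?_
  rw [logisticSpeedDecay, logisticSpeed]
  field_simp
  ring

theorem logisticDilatation_pos (t : ℝ) : 0 < logisticDilatation t :=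
  div_pos (ellipticK_sigmoid_pos t) (ellipticK_sigmoid_pos (-t))

theorem continuous_logisticDilatation : Continuous logisticDilatation :=
  continuous_iff_continuousAt.2 fun t ↦ (hasDerivAt_logisticDilatation t).continuousAt

theorem strictMono_logisticDilatation : StrictMono logisticDilatation :=
  strictMono_of_hasDerivAt_pos hasDerivAt_logisticDilatation fun t ↦ inv_pos.2 (logisticSpeed_pos t)

theorem logisticDilatation_zero : logisticDilatation 0 = 1 := by
  rw [logisticDilatation, neg_zero, div_self (ellipticK_sigmoid_pos 0).ne']

theorem logisticSpeedDecay_zero : logisticSpeedDecay 0 = 1 / 2 := by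
  have hlegendre := legendre_relation ⟨sigmoid_pos 0, sigmoid_lt_one 0⟩
  rw [← sigmoid_neg, neg_zero] at hlegendre
  rw [logisticSpeedDecay, neg_zero]
  field_simp
  linarith

theorem sigmoid_neg_le_half (ht : 0 ≤ t) : sigmoid (-t) ≤ 1 / 2 := by
  rw [one_div, ← sigmoid_zero]
  exact Real.sigmoid_le (neg_nonpos.2 ht)

theorem logisticSpeedDecay_pos (t : ℝ) : 0 < logisticSpeedDecay t := by
  have := ellipticK_sigmoid_pos (-t)
  have := (logitDerivK_mem_Ioc (sigmoid_pos (-t)) (sigmoid_lt_one _)).1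
  have := Real.pi_pos
  unfold logisticSpeedDecay
  positivity

theorem eight_mul_logisticSpeedDecay_le (ht : 0 ≤ t) :
    8 * logisticSpeedDecay t ≤ logisticSpeed t := by
  have hK := ellipticK_sigmoid_pos (-t)
  have := Real.pi_pos
  have hZ : 8 * logitDerivK (sigmoid (-t)) ≤ ellipticK (sigmoid (-t)) := by
    nlinarith [(logitDerivK_mem_Ioc (sigmoid_pos (-t)) (sigmoid_lt_one _)).2,
      sigmoid_neg_le_half ht]
  calc 8 * logisticSpeedDecay t =
        4 / Real.pi * (ellipticK (sigmoid (-t)) * (8 * logitDerivK (sigmoid (-t)))) := by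
        rw [logisticSpeedDecay]
        ring
    _ ≤ 4 / Real.pi * (ellipticK (sigmoid (-t)) * ellipticK (sigmoid (-t))) := by gcongr
    _ = logisticSpeed t := by rw [logisticSpeed, sq]

theorem antitone_logisticSpeed : Antitone logisticSpeed :=
  antitone_of_hasDerivAt_nonpos hasDerivAt_logisticSpeed fun t ↦
    mul_nonpos_of_nonpos_of_nonneg (by norm_num) (logisticSpeedDecay_pos t).le

theorem one_add_div_le_logisticDilatation (ht : 0 ≤ t) :
    1 + t / logisticSpeed 0 ≤ logisticDilatation t := by
  have hslope := (convex_Ici (0 : ℝ)).mul_sub_le_image_sub_of_le_deriv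
    continuous_logisticDilatation.continuousOn
    (fun x _ ↦ (hasDerivAt_logisticDilatation x).differentiableAt.differentiableWithinAt)
    (C := (logisticSpeed 0)⁻¹)
    (fun x hx ↦ by
      rw [(hasDerivAt_logisticDilatation x).deriv]
      exact inv_anti₀ (logisticSpeed_pos x) (antitone_logisticSpeed (interior_subset hx)))
    0 self_mem_Ici t ht ht
  rw [sub_zero, logisticDilatation_zero] at hslope
  rw [div_eq_inv_mul]
  linarith

theorem exists_logisticDilatation_eq {K : ℝ} (hK : 1 < K) : ∃ t > 0, logisticDilatation t = K := by
  have hv := logisticSpeed_pos 0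
  have hT : 0 ≤ logisticSpeed 0 * (K - 1) := mul_nonneg hv.le (sub_nonneg.2 hK.le)
  have hKT : K ≤ logisticDilatation (logisticSpeed 0 * (K - 1)) := by
    have := one_add_div_le_logisticDilatation hT
    rwa [mul_div_cancel_left₀ _ hv.ne', add_sub_cancel] at this
  obtain ⟨t, -, rfl⟩ := intermediate_value_Icc hT continuous_logisticDilatation.continuousOn
    ⟨logisticDilatation_zero.trans_le hK.le, hKT⟩
  exact ⟨t, strictMono_logisticDilatation.lt_iff_lt.1 (logisticDilatation_zero.trans_lt hK), rfl⟩

theorem ellK_eq_ellipticK (r : ℝ) : ellK r = ellipticK (r ^ 2) := rfl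

theorem mu_sqrt_sigmoid (t : ℝ) :
    mu √(sigmoid t) = Real.pi / (2 * logisticDilatation t) := by
  have := ellipticK_sigmoid_pos t
  have := ellipticK_sigmoid_pos (-t)
  rw [mu, ellK_eq_ellipticK, ellK_eq_ellipticK, Real.sq_sqrt (sigmoid_pos t).le, ← sigmoid_neg,
    Real.sq_sqrt (sigmoid_pos (-t)).le, logisticDilatation]
  field_simp

theorem sigmoid_div_one_sub_sigmoid (t : ℝ) : sigmoid t / (1 - sigmoid t) = Real.exp t := by
  rw [← sigmoid_neg, div_eq_iff (sigmoid_pos (-t)).ne', ← Real.sigmoid_mul_rexp_neg, mul_comm,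
    mul_assoc, ← Real.exp_add, neg_add_cancel, Real.exp_zero, mul_one]

theorem lambda_logisticDilatation {lam : ℝ → ℝ}
    (hlam : ∀ K : ℝ, 0 < K → ∀ r ∈ Ioo (0 : ℝ) 1,
      mu r = Real.pi / (2 * K) → lam K = r ^ 2 / (1 - r ^ 2)) (t : ℝ) :
    lam (logisticDilatation t) = Real.exp t := by
  have hr : √(sigmoid t) ∈ Ioo 0 1 :=
    ⟨Real.sqrt_pos.2 (sigmoid_pos t), by
      rw [Real.sqrt_lt' one_pos, one_pow]
      exact sigmoid_lt_one t⟩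
  rw [hlam _ (logisticDilatation_pos t) _ hr (mu_sqrt_sigmoid t), Real.sq_sqrt (sigmoid_pos t).le,
    sigmoid_div_one_sub_sigmoid]

theorem logisticDilatation_eq_two_mul {t u r : ℝ} (hr : r ∈ Ioo 0 1) (hu : sigmoid u = r ^ 2)
    (ht : sigmoid (-t) = ((1 - r) / (1 + r)) ^ 2) :
    logisticDilatation t = 2 * logisticDilatation u := by
  have ht' : sigmoid t = 1 - ((1 - r) / (1 + r)) ^ 2 := by rw [← ht, sigmoid_neg, sub_sub_cancel]
  rw [logisticDilatation, logisticDilatation, ht, ht', sigmoid_neg u, hu]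
  exact ellipticK_one_sub_div_landen hr

theorem logisticDilatation_log_four_mul_sqrt_two :
    logisticDilatation (Real.log (4 * √2 * (√2 + 1) ^ 2)) = 2 := by
  have hsq : √2 ^ 2 = (2 : ℝ) := Real.sq_sqrt zero_le_two
  have hr : √2 / 2 ∈ Ioo (0 : ℝ) 1 := ⟨by positivity, by nlinarith [Real.sqrt_nonneg 2]⟩
  rw [logisticDilatation_eq_two_mul (u := 0) hr, logisticDilatation_zero, mul_one]
  · rw [sigmoid_zero, div_pow, hsq]
    norm_num
  · rw [sigmoid, neg_neg, Real.exp_log (by positivity)]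
    field_simp
    grobner

end LogisticCoordinate

section DilatationDerivatives

open Real (sigmoid sigmoid_pos sigmoid_lt_one sigmoid_zero)

variable {k : ℕ} {t : ℝ}

/-- The `k`-th derivative of the distortion function `λ` with respect to the dilatation, as
a function of the logistic coordinate, in which `λ = eᵗ` and the derivation is `v · d/dt`. -/
noncomputable def lambdaDeriv (k : ℕ) : ℝ → ℝ :=
  (fun f t ↦ logisticSpeed t * deriv f t)^[k] Real.exp

theorem lambdaDeriv_zero : lambdaDeriv 0 = Real.exp := rfl

theorem lambdaDeriv_succ (k : ℕ) (t : ℝ) :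
    lambdaDeriv (k + 1) t = logisticSpeed t * deriv (lambdaDeriv k) t := by
  simp only [lambdaDeriv, Function.iterate_succ_apply']

theorem hasDerivAt_lambdaDeriv (h : DifferentiableAt ℝ (lambdaDeriv k) t) :
    HasDerivAt (lambdaDeriv k) (lambdaDeriv (k + 1) t * (logisticSpeed t)⁻¹) t :=
  h.hasDerivAt.congr_deriv <| by
    rw [lambdaDeriv_succ, mul_comm (logisticSpeed t),
      mul_inv_cancel_right₀ (logisticSpeed_pos t).ne']

theorem lambdaDeriv_succ_of_eq_exp_mul {A A' : ℝ → ℝ}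
    (h : lambdaDeriv k = fun t ↦ Real.exp t * A t) (hA : ∀ t, HasDerivAt A (A' t) t) :
    lambdaDeriv (k + 1) = fun t ↦ Real.exp t * (logisticSpeed t * (A t + A' t)) := by
  funext t
  rw [lambdaDeriv_succ, h, ((Real.hasDerivAt_exp t).fun_mul (hA t)).deriv]
  ring

theorem lambdaDeriv_one : lambdaDeriv 1 = fun t ↦ Real.exp t * logisticSpeed t := by
  rw [lambdaDeriv_succ_of_eq_exp_mul (k := 0) (A := fun _ ↦ 1) (by simp [lambdaDeriv_zero])
    fun t ↦ hasDerivAt_const t 1]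
  simp

theorem lambdaDeriv_two :
    lambdaDeriv 2 = fun t ↦
      Real.exp t * (logisticSpeed t * (logisticSpeed t - 2 * logisticSpeedDecay t)) := by
  rw [lambdaDeriv_succ_of_eq_exp_mul lambdaDeriv_one hasDerivAt_logisticSpeed]
  ring_nf

theorem lambdaDeriv_three :
    lambdaDeriv 3 = fun t ↦ Real.exp t * (logisticSpeed t *
      (logisticSpeed t ^ 2 - 6 * logisticSpeed t * logisticSpeedDecay t +
        6 * logisticSpeedDecay t ^ 2 +
        sigmoid (-t) * (1 - sigmoid (-t)) / 2 * logisticSpeed t ^ 2)) := by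
  rw [lambdaDeriv_succ_of_eq_exp_mul lambdaDeriv_two fun t ↦ (hasDerivAt_logisticSpeed t).fun_mul
    ((hasDerivAt_logisticSpeed t).fun_sub ((hasDerivAt_logisticSpeedDecay t).const_mul 2))]
  funext t
  have := logisticSpeed_pos t
  field_simp
  ring

theorem lambdaDeriv_four (t : ℝ) :
    lambdaDeriv 4 t = Real.exp t * (logisticSpeed t *
      (logisticSpeed t ^ 3 * (1 + sigmoid (-t) * (1 - sigmoid (-t)) * (3 / 2 + sigmoid (-t))) -
        12 * logisticSpeed t ^ 2 * logisticSpeedDecay t *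
          (1 + sigmoid (-t) * (1 - sigmoid (-t)) / 2) +
        36 * logisticSpeed t * logisticSpeedDecay t ^ 2 - 24 * logisticSpeedDecay t ^ 3)) := by
  have hv := hasDerivAt_logisticSpeed
  have hp := hasDerivAt_logisticSpeedDecay
  have hm := hasDerivAt_sigmoid_neg
  rw [lambdaDeriv_succ_of_eq_exp_mul lambdaDeriv_three fun t ↦ (hv t).fun_mul
    (((((hv t).fun_pow 2).fun_sub (((hv t).const_mul 6).fun_mul (hp t))).fun_add
      (((hp t).fun_pow 2).const_mul 6)).fun_add
      ((((hm t).fun_mul ((hm t).const_sub 1)).div_const 2).fun_mul ((hv t).fun_pow 2)))]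
  have := logisticSpeed_pos t
  push_cast
  field_simp
  ring

theorem differentiable_lambdaDeriv (hk : k ≤ 3) : Differentiable ℝ (lambdaDeriv k) := by
  have hv : Differentiable ℝ logisticSpeed := fun t ↦ (hasDerivAt_logisticSpeed t).differentiableAt
  have hp : Differentiable ℝ logisticSpeedDecay := fun t ↦
    (hasDerivAt_logisticSpeedDecay t).differentiableAt
  interval_cases k
  · exact Real.differentiable_exp
  · rw [lambdaDeriv_one]
    fun_prop
  · rw [lambdaDeriv_two]
    fun_prop
  · rw [lambdaDeriv_three]
    fun_prop

theorem lambdaDeriv_four_factor_pos {m v p : ℝ} (hm : m ∈ Ioo 0 1) (hp : 0 < p) (hv : 8 * p ≤ v) :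
    0 < v ^ 3 * (1 + m * (1 - m) * (3 / 2 + m)) - 12 * v ^ 2 * p * (1 + m * (1 - m) / 2) +
      36 * v * p ^ 2 - 24 * p ^ 3 := by
  obtain ⟨hm₀, hm₁⟩ := hm
  obtain ⟨d, rfl⟩ : ∃ d, v = 8 * p + d := ⟨v - 8 * p, by ring⟩
  have hd : 0 ≤ d := by linarith
  have : 0 < 1 - m := sub_pos.2 hm₁
  have hfactor : 0 ≤ (8 * p + d) * (3 / 2 + m) - 6 * p := by
    nlinarith [mul_nonneg hd hm₀.le, mul_pos hp hm₀]
  calc 0 < (8 * p ^ 3 + 36 * p ^ 2 * d + 12 * p * d ^ 2 + d ^ 3) +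
        m * (1 - m) * (8 * p + d) ^ 2 * ((8 * p + d) * (3 / 2 + m) - 6 * p) := by positivity
    _ = _ := by ring

theorem lambdaDeriv_four_pos (ht : 0 ≤ t) : 0 < lambdaDeriv 4 t := by
  rw [lambdaDeriv_four]
  exact mul_pos (Real.exp_pos t) <| mul_pos (logisticSpeed_pos t) <| lambdaDeriv_four_factor_pos
    ⟨sigmoid_pos (-t), sigmoid_lt_one (-t)⟩ (logisticSpeedDecay_pos t)
    (eight_mul_logisticSpeedDecay_le ht)

theorem strictMonoOn_lambdaDeriv_three : StrictMonoOn (lambdaDeriv 3) (Ici 0) := by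
  have hdiff := differentiable_lambdaDeriv le_rfl
  refine strictMonoOn_of_hasDerivWithinAt_pos (convex_Ici 0) hdiff.continuous.continuousOn
    (fun t _ ↦ (hasDerivAt_lambdaDeriv (hdiff t)).hasDerivWithinAt) fun t ht ↦ ?_
  exact mul_pos (lambdaDeriv_four_pos (interior_subset ht)) (inv_pos.2 (logisticSpeed_pos t))

theorem lambdaDeriv_one_zero : lambdaDeriv 1 0 = logisticSpeed 0 := by
  simp [lambdaDeriv_one]

theorem lambdaDeriv_two_zero : lambdaDeriv 2 0 = logisticSpeed 0 * (logisticSpeed 0 - 1) := by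
  simp [lambdaDeriv_two, logisticSpeedDecay_zero]

theorem lambdaDeriv_three_zero :
    lambdaDeriv 3 0 =
      3 / 8 * (logisticSpeed 0 * (4 * (logisticSpeed 0 - 1) ^ 2 - logisticSpeed 0 ^ 2)) := by
  simp only [lambdaDeriv_three, logisticSpeedDecay_zero, neg_zero, sigmoid_zero, Real.exp_zero]
  ring

theorem logisticSpeed_zero : logisticSpeed 0 = 4 / Real.pi * ellK (1 / √2) ^ 2 := by
  rw [logisticSpeed, neg_zero, sigmoid_zero, ellK_eq_ellipticK, div_pow, one_pow,
    Real.sq_sqrt zero_le_two, one_div]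

end DilatationDerivatives

section LambdaBounds

variable {t : ℝ}

/-- The quotient of `λ` minus its quadratic Taylor polynomial at `K = 1` by `(K - 1)³`, in the
logistic coordinate. -/
noncomputable def lambdaTaylorQuotient : ℝ → ℝ :=
  taylorQuotient lambdaDeriv logisticDilatation 0 3

theorem exp_eq_taylor_add_lambdaTaylorQuotient_mul (ht : 0 < t) :
    Real.exp t = 1 + logisticSpeed 0 * (logisticDilatation t - 1) +
      1 / 2 * logisticSpeed 0 * (logisticSpeed 0 - 1) * (logisticDilatation t - 1) ^ 2 +
      lambdaTaylorQuotient t * (logisticDilatation t - 1) ^ 3 := by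
  have hne : logisticDilatation t - 1 ≠ 0 :=
    (sub_pos.2 (logisticDilatation_zero ▸ strictMono_logisticDilatation ht)).ne'
  simp only [lambdaTaylorQuotient, taylorQuotient, taylorRemainder, Finset.sum_range_succ,
    Finset.sum_range_zero, logisticDilatation_zero, lambdaDeriv_zero, lambdaDeriv_one_zero,
    lambdaDeriv_two_zero, Real.exp_zero, Nat.factorial]
  rw [div_mul_cancel₀ _ (pow_ne_zero 3 hne)]
  push_cast
  ring

theorem strictMonoOn_lambdaTaylorQuotient : StrictMonoOn lambdaTaylorQuotient (Ioi 0) :=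
  strictMonoOn_taylorQuotient continuous_logisticDilatation.continuousOn
    (fun t _ ↦ hasDerivAt_logisticDilatation t) (fun t _ ↦ inv_pos.2 (logisticSpeed_pos t))
    (fun _ hk ↦ (differentiable_lambdaDeriv hk.le).continuous.continuousOn)
    (fun _ hk t _ ↦ hasDerivAt_lambdaDeriv (differentiable_lambdaDeriv hk.le t))
    (strictMonoOn_lambdaDeriv_three.mono Ioi_subset_Ici_self)

theorem lt_lambdaTaylorQuotient (ht : 0 < t) :
    logisticSpeed 0 * (4 * (logisticSpeed 0 - 1) ^ 2 - logisticSpeed 0 ^ 2) / 16 <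
      lambdaTaylorQuotient t := by
  refine lt_of_eq_of_lt ?_ (lt_taylorQuotient (n := 3) continuous_logisticDilatation.continuousOn
    (fun t _ ↦ hasDerivAt_logisticDilatation t) (fun t _ ↦ inv_pos.2 (logisticSpeed_pos t))
    (fun _ hk ↦ (differentiable_lambdaDeriv hk.le).continuous.continuousOn)
    (fun _ hk t _ ↦ hasDerivAt_lambdaDeriv (differentiable_lambdaDeriv hk.le t))
    (fun t ht ↦ strictMonoOn_lambdaDeriv_three self_mem_Ici (Ioi_subset_Ici_self ht) ht) ht)
  rw [lambdaDeriv_three_zero, show (Nat.factorial 3 : ℝ) = 6 by norm_num [Nat.factorial]]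
  ring

theorem log_four_mul_sqrt_two_pos : 0 < Real.log (4 * √2 * (√2 + 1) ^ 2) := by
  rw [← strictMono_logisticDilatation.lt_iff_lt, logisticDilatation_zero,
    logisticDilatation_log_four_mul_sqrt_two]
  exact one_lt_two

theorem lambdaTaylorQuotient_log_four_mul_sqrt_two :
    lambdaTaylorQuotient (Real.log (4 * √2 * (√2 + 1) ^ 2)) =
      4 * √2 * (√2 + 1) ^ 2 - 1 - logisticSpeed 0 -
        1 / 2 * logisticSpeed 0 * (logisticSpeed 0 - 1) := by
  have h := exp_eq_taylor_add_lambdaTaylorQuotient_mul log_four_mul_sqrt_two_pos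
  rw [logisticDilatation_log_four_mul_sqrt_two, Real.exp_log (by positivity)] at h
  linarith

end LambdaBounds

theorem stmt_8 (lam : ℝ → ℝ)
    (hlam : ∀ K : ℝ, 0 < K → ∀ r ∈ Set.Ioo (0:ℝ) 1,
      mu r = Real.pi / (2 * K) → lam K = r ^ 2 / (1 - r ^ 2)) (a c c₁ : ℝ)
    (ha : a = 4 / Real.pi * ellK (1 / Real.sqrt 2) ^ 2)
    (hc : c = a * (4 * (a - 1) ^ 2 - a ^ 2) / 16)
    (hc₁ : c₁ = 4 * Real.sqrt 2 * (Real.sqrt 2 + 1) ^ 2 - 1 - a - 1 / 2 * a * (a - 1)) :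
    (∀ K : ℝ, 1 < K →
      1 + a * (K - 1) + 1 / 2 * a * (a - 1) * (K - 1) ^ 2 + c * (K - 1) ^ 3 < lam K) ∧
    (∀ K ∈ Set.Ioo (1:ℝ) 2,
      lam K < 1 + a * (K - 1) + 1 / 2 * a * (a - 1) * (K - 1) ^ 2 + c₁ * (K - 1) ^ 3) := by
  rw [← logisticSpeed_zero] at ha
  subst ha
  rw [← lambdaTaylorQuotient_log_four_mul_sqrt_two] at hc₁
  constructor
  · intro K hK
    obtain ⟨t, ht, rfl⟩ := exists_logisticDilatation_eq hK
    rw [lambda_logisticDilatation hlam, exp_eq_taylor_add_lambdaTaylorQuotient_mul ht]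
    have hlt : c < lambdaTaylorQuotient t := hc.trans_lt (lt_lambdaTaylorQuotient ht)
    have := sub_pos.2 hK
    gcongr
  · rintro K ⟨hK, hK₂⟩
    obtain ⟨t, ht, rfl⟩ := exists_logisticDilatation_eq hK
    rw [lambda_logisticDilatation hlam, exp_eq_taylor_add_lambdaTaylorQuotient_mul ht]
    have ht₂ : t < Real.log (4 * √2 * (√2 + 1) ^ 2) := by
      rwa [← strictMono_logisticDilatation.lt_iff_lt, logisticDilatation_log_four_mul_sqrt_two]
    have hlt : lambdaTaylorQuotient t < c₁ :=
      (strictMonoOn_lambdaTaylorQuotient ht log_four_mul_sqrt_two_pos ht₂).trans_eq hc₁.symm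
    have := sub_pos.2 hK
    gcongr
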